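/- arXiv:2202.09402 — 5 statements merged into one kernel-verified Lean document; each statement's English description precedes it below -/
import Mathlib

section
/- Every safety-function iterate takes values in the finite set D = {0} ∪ {‖f (q i) + ξ s − q j‖ : i ∈ Fin N, s ∈ Fin M, j ∈ Fin N}, i.e. for all k and i one has U_k(i) ∈ D; consequently the iteration stabilizes after finitely many steps: there exists K ∈ ℕ with U_{K+1} = U_K. -/
/-- The safety operator of the partial control method:
`(T U) i = max_{s} min_{j} max (‖f (q i) + ξ s - q j‖) (U j)`. -/
noncomputable def safetyOp {X : Type*} [NormedAddCommGroup X] {N M : ℕ}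
    [NeZero N] [NeZero M] (q : Fin N → X) (f : X → X) (ξ : Fin M → X)
    (U : Fin N → ℝ) : Fin N → ℝ :=
  fun i => Finset.univ.sup' Finset.univ_nonempty fun s : Fin M =>
    Finset.univ.inf' Finset.univ_nonempty fun j : Fin N =>
      max ‖f (q i) + ξ s - q j‖ (U j)

/-- The safety-function iterates: `U₀ = 0` and `U_{k+1} = T U_k`. -/
noncomputable def safetyIter {X : Type*} [NormedAddCommGroup X] {N M : ℕ}
    [NeZero N] [NeZero M] (q : Fin N → X) (f : X → X) (ξ : Fin M → X) :
    ℕ → Fin N → ℝ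
  | 0 => 0
  | k + 1 => safetyOp q f ξ (safetyIter q f ξ k)

/-! The safety operator is monotone and built from `max` and `min` alone, so every value it produces
is either a distance or a value of its argument. The iterates therefore increase from `0` inside the
finite set of functions whose values are distances or `0`, and an increasing sequence in a finite
set is eventually constant. -/

theorem exists_forall_ge_eq_of_monotone_of_finite_range {ι α : Type*} [Preorder ι] [Nonempty ι]
    [PartialOrder α] {u : ι → α} (hu : Monotone u) (hfin : (Set.range u).Finite) :
    ∃ K, ∀ n, K ≤ n → u n = u K := by
  obtain ⟨_, ⟨K, rfl⟩, hmax⟩ := hfin.exists_maximal (Set.range_nonempty u)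
  exact ⟨K, fun n hKn => (hmax ⟨n, rfl⟩ (hu hKn)).antisymm (hu hKn)⟩

section Safety

variable {X : Type*} [NormedAddCommGroup X] {N M : ℕ} [NeZero N] [NeZero M]
  {q : Fin N → X} {f : X → X} {ξ : Fin M → X}

theorem safetyOp_mono : Monotone (safetyOp q f ξ) := fun _ _ hUV _ =>
  Finset.sup'_mono_fun fun _ _ => Finset.inf'_mono_fun fun j _ => max_le_max_left _ (hUV j)

theorem safetyOp_mem {S : Set ℝ} (hdist : ∀ i s j, ‖f (q i) + ξ s - q j‖ ∈ S)
    {U : Fin N → ℝ} (hU : ∀ j, U j ∈ S) (i : Fin N) : safetyOp q f ξ U i ∈ S :=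
  (LinearOrder.supClosed S).finsetSup'_mem _ fun s _ =>
    (LinearOrder.infClosed S).finsetInf'_mem _ fun j _ =>
      LinearOrder.supClosed S (hdist i s j) (hU j)

theorem safetyIter_mem {S : Set ℝ} (hzero : 0 ∈ S)
    (hdist : ∀ i s j, ‖f (q i) + ξ s - q j‖ ∈ S) (k : ℕ) (i : Fin N) :
    safetyIter q f ξ k i ∈ S := by
  induction k generalizing i with
  | zero => exact hzero
  | succ k ih => exact safetyOp_mem hdist ih i

theorem safetyIter_nonneg (k : ℕ) : 0 ≤ safetyIter q f ξ k := fun i =>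
  safetyIter_mem (S := Set.Ici 0) Set.self_mem_Ici (fun _ _ _ => Set.mem_Ici.2 (norm_nonneg _)) k i

theorem safetyIter_mono : Monotone (safetyIter q f ξ) := by
  refine monotone_nat_of_le_succ fun k => ?_
  induction k with
  | zero => exact safetyIter_nonneg 1
  | succ k ih => exact safetyOp_mono ih

end Safety

/-- Every iterate takes values in the finite set
`D = {0} ∪ {‖f (q i) + ξ s − q j‖}`, hence the iteration stabilizes. -/
theorem safetyIter_finite_values_and_stabilizes {X : Type*} [NormedAddCommGroup X]
    {N M : ℕ} [NeZero N] [NeZero M] (q : Fin N → X) (f : X → X) (ξ : Fin M → X) :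
    (∀ (k : ℕ) (i : Fin N),
      safetyIter q f ξ k i ∈
        insert (0 : ℝ) ((Finset.univ : Finset (Fin N × Fin M × Fin N)).image
          fun p => ‖f (q p.1) + ξ p.2.1 - q p.2.2‖)) ∧
    ∃ K : ℕ, safetyIter q f ξ (K + 1) = safetyIter q f ξ K := by
  set D := insert (0 : ℝ) ((Finset.univ : Finset (Fin N × Fin M × Fin N)).image
    fun p => ‖f (q p.1) + ξ p.2.1 - q p.2.2‖)
  have hdist (i s j) : ‖f (q i) + ξ s - q j‖ ∈ (D : Set ℝ) :=
    Finset.mem_insert_of_mem (Finset.mem_image_of_mem _ (Finset.mem_univ (i, s, j)))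
  have hmem : ∀ k i, safetyIter q f ξ k i ∈ (D : Set ℝ) :=
    safetyIter_mem (Finset.mem_insert_self _ _) hdist
  have hfin : (Set.range (safetyIter q f ξ)).Finite :=
    (Set.Finite.pi' fun _ => D.finite_toSet).subset (Set.range_subset_iff.2 hmem)
  obtain ⟨K, hK⟩ := exists_forall_ge_eq_of_monotone_of_finite_range safetyIter_mono hfin
  exact ⟨hmem, K, hK (K + 1) K.le_succ⟩
end

section
/- Infinite-horizon controllability: let U : Fin N → ℝ be a fixed point of the safety operator T with U ≥ 0 pointwise, let u₀ ∈ ℝ, let i₀ ∈ Fin N satisfy U(i₀) ≤ u₀, and let s : ℕ → Fin M be an arbitrary disturbance sequence. Then there exists a sequence of grid indices i : ℕ → Fin N with i(0) = i₀ such that for every n the control u_n := q (i(n+1)) − f (q (i(n))) − ξ (s(n)) satisfies ‖u_n‖ ≤ u₀ and U(i(n+1)) ≤ u₀; in particular the controlled orbit x_{n+1} = f(x_n) + ξ(s(n)) + u_n starting at x₀ = q(i₀) remains forever in the safe set {q j : U(j) ≤ u₀}. -/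
/-!
The minimum in the safety operator is attained, so a minimizing grid point gives a feedback `κ`,
depending only on the current grid point and the current disturbance, with
`max ‖control‖ (U (κ i s)) ≤ (T U) i`. If `T U ≤ U`, then `U` is a Lyapunov function for this
feedback: it never increases along a closed-loop orbit and bounds each control on the way.
-/

/-- The closed-loop orbit from `a` of the feedback `κ` under the disturbance sequence `s`. The
`n`-th step reads only the current state and `s n`, so the orbit cannot anticipate `s`. -/
def feedbackOrbit {α β : Type*} (κ : α → β → α) (s : ℕ → β) (a : α) : ℕ → α
  | 0 => a
  | n + 1 => κ (feedbackOrbit κ s a n) (s n)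

theorem antitone_comp_feedbackOrbit {α β γ : Type*} [Preorder γ] {κ : α → β → α} {V : α → γ}
    (hV : ∀ a b, V (κ a b) ≤ V a) (s : ℕ → β) (a : α) : Antitone (V ∘ feedbackOrbit κ s a) :=
  antitone_nat_of_succ_le fun n => hV (feedbackOrbit κ s a n) (s n)

section SafetyOp

variable {X : Type*} [NormedAddCommGroup X] {N M : ℕ} [NeZero N] [NeZero M]
  (q : Fin N → X) (f : X → X) (ξ : Fin M → X)

theorem exists_max_norm_control_le_safetyOp (U : Fin N → ℝ) (i : Fin N) (s : Fin M) :
    ∃ j, max ‖q j - f (q i) - ξ s‖ (U j) ≤ safetyOp q f ξ U i := by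
  have inf_le : Finset.univ.inf' Finset.univ_nonempty
      (fun j => max ‖f (q i) + ξ s - q j‖ (U j)) ≤ safetyOp q f ξ U i :=
    (Finset.sup'_le_iff _ _).1 (le_refl (safetyOp q f ξ U i)) s (Finset.mem_univ s)
  obtain ⟨j, -, hj⟩ := (Finset.inf'_le_iff _).1 inf_le
  exact ⟨j, by rwa [sub_sub, norm_sub_rev]⟩

theorem infinite_horizon_controllability_general {U : Fin N → ℝ} (hU : safetyOp q f ξ U ≤ U) :
    ∃ κ : Fin N → Fin M → Fin N, ∀ (i₀ : Fin N) (s : ℕ → Fin M),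
      Antitone (U ∘ feedbackOrbit κ s i₀) ∧
      ∀ n, ‖q (feedbackOrbit κ s i₀ (n + 1)) - f (q (feedbackOrbit κ s i₀ n)) - ξ (s n)‖ ≤
        U (feedbackOrbit κ s i₀ n) := by
  choose κ hκ using exists_max_norm_control_le_safetyOp q f ξ U
  have control_le (i : Fin N) (t : Fin M) : ‖q (κ i t) - f (q i) - ξ t‖ ≤ U i :=
    (le_max_left _ _).trans ((hκ i t).trans (hU i))
  have value_le (i : Fin N) (t : Fin M) : U (κ i t) ≤ U i :=
    (le_max_right _ _).trans ((hκ i t).trans (hU i))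
  exact ⟨κ, fun i₀ s => ⟨antitone_comp_feedbackOrbit value_le s i₀,
    fun n => control_le (feedbackOrbit κ s i₀ n) (s n)⟩⟩

end SafetyOp

/-- Infinite-horizon controllability: starting in the sublevel set `{U ≤ u₀}` of a
nonnegative fixed point of the safety operator, for any disturbance sequence there is a
sequence of grid points (the controlled orbit) whose controls are bounded by `u₀` and
which stays forever in the safe set `{q j : U j ≤ u₀}`. -/
theorem infinite_horizon_controllability {X : Type*} [NormedAddCommGroup X]
    {N M : ℕ} [NeZero N] [NeZero M] (q : Fin N → X) (f : X → X) (ξ : Fin M → X)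
    (U : Fin N → ℝ) (hfix : safetyOp q f ξ U = U) (hpos : ∀ i, 0 ≤ U i)
    (u₀ : ℝ) (i₀ : Fin N) (hi₀ : U i₀ ≤ u₀) (s : ℕ → Fin M) :
    ∃ i : ℕ → Fin N, i 0 = i₀ ∧ ∀ n : ℕ,
      ‖q (i (n + 1)) - f (q (i n)) - ξ (s n)‖ ≤ u₀ ∧ U (i (n + 1)) ≤ u₀ := by
  obtain ⟨κ, hκ⟩ := infinite_horizon_controllability_general q f ξ hfix.le
  have safe (n : ℕ) : U (feedbackOrbit κ s i₀ n) ≤ u₀ := ((hκ i₀ s).1 n.zero_le).trans hi₀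
  exact ⟨feedbackOrbit κ s i₀, rfl, fun n => ⟨((hκ i₀ s).2 n).trans (safe n), safe (n + 1)⟩⟩
end

section
/- Game-theoretic characterization of the safety-function iterates: fix u₀ ≥ 0 and define inductively the predicates Safe₀(i) := True and Safe_{k+1}(i) := ∀ s : Fin M, ∃ j : Fin N, ‖f (q i) + ξ s − q j‖ ≤ u₀ ∧ Safe_k(j). Then for every k ∈ ℕ and every i ∈ Fin N, Safe_k(i) holds if and only if U_k(i) ≤ u₀. -/
/-- The game-theoretic safety predicates: `Safe₀ i = True` and
`Safe_{k+1} i = ∀ s, ∃ j, ‖f (q i) + ξ s − q j‖ ≤ u₀ ∧ Safe_k j`. -/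
def safePred {X : Type*} [NormedAddCommGroup X] {N M : ℕ}
    (q : Fin N → X) (f : X → X) (ξ : Fin M → X) (u₀ : ℝ) : ℕ → Fin N → Prop
  | 0 => fun _ => True
  | k + 1 => fun i => ∀ s : Fin M, ∃ j : Fin N,
      ‖f (q i) + ξ s - q j‖ ≤ u₀ ∧ safePred q f ξ u₀ k j

theorem safetyOp_le_iff {X : Type*} [NormedAddCommGroup X] {N M : ℕ} [NeZero N] [NeZero M]
    {q : Fin N → X} {f : X → X} {ξ : Fin M → X} {U : Fin N → ℝ} {i : Fin N} {r : ℝ} :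
    safetyOp q f ξ U i ≤ r ↔
      ∀ s : Fin M, ∃ j : Fin N, ‖f (q i) + ξ s - q j‖ ≤ r ∧ U j ≤ r := by
  simp only [safetyOp, Finset.sup'_le_iff, Finset.inf'_le_iff, Finset.mem_univ, true_and,
    forall_const, max_le_iff]

/-- Game-theoretic characterization of the safety-function iterates. -/
theorem safePred_iff_safetyIter_le {X : Type*} [NormedAddCommGroup X]
    {N M : ℕ} [NeZero N] [NeZero M] (q : Fin N → X) (f : X → X) (ξ : Fin M → X)
    (u₀ : ℝ) (hu₀ : 0 ≤ u₀) :
    ∀ (k : ℕ) (i : Fin N), safePred q f ξ u₀ k i ↔ safetyIter q f ξ k i ≤ u₀ := by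
  intro k
  induction k with
  | zero => exact fun _ => iff_of_true trivial hu₀
  | succ k ih =>
    intro i
    calc safePred q f ξ u₀ (k + 1) i
        ↔ ∀ s, ∃ j, ‖f (q i) + ξ s - q j‖ ≤ u₀ ∧ safePred q f ξ u₀ k j := Iff.rfl
      _ ↔ ∀ s, ∃ j, ‖f (q i) + ξ s - q j‖ ≤ u₀ ∧ safetyIter q f ξ k j ≤ u₀ := by
        simp only [ih]
      _ ↔ safetyIter q f ξ (k + 1) i ≤ u₀ := safetyOp_le_iff.symm
end

section
/- Existence criterion for safe sets: fix u₀ ≥ 0 and assume the safety-function iteration stabilizes at step K, with U_∞ := U_K satisfying U_{K+1} = U_K. Then there exists a nonempty set A ⊆ Fin N with the classical safe-set property (for every i ∈ A and every s ∈ Fin M there exists j ∈ A with ‖f (q i) + ξ s − q j‖ ≤ u₀) if and only if u₀ ≥ min_{i ∈ Fin N} U_∞(i). -/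
/-!
The bound `T U i ≤ u` says exactly that, whatever the disturbance, some `j` with `U j ≤ u` can be
reached from `i` at cost at most `u`. Hence if `T U ≤ U`, the sublevel set `{i | U i ≤ u}` is safe;
and conversely, on any safe set the bound `U ≤ u` is inherited by `T U`, hence by all the iterates.
-/

section Minimax

open Finset

variable {ι σ α : Type*} [LinearOrder α] {c : ι → σ → ι → α} {U : ι → α} {u : α} {A : Set ι}

/-- `A` is a safe set for the control bound `u`: against every disturbance `s`, each state of `A`
can be steered back into `A`. Here `c i s j` is the control needed to move the state `i` to `j`
under `s`, which is `‖f (q i) + ξ s - q j‖` for a map `f` on a grid `q`. -/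
def IsSafeSet (c : ι → σ → ι → α) (u : α) (A : Set ι) : Prop :=
  ∀ i ∈ A, ∀ s, ∃ j ∈ A, c i s j ≤ u

variable [Fintype ι] [Nonempty ι] [Fintype σ] [Nonempty σ]

/-- The safety operator of an arbitrary control cost `c`, where `c i s j` is the control needed to
move the state `i` to `j` under the disturbance `s`; `safetyOp` is the case
`c i s j = ‖f (q i) + ξ s - q j‖`. -/
def minimaxOp (c : ι → σ → ι → α) (U : ι → α) : ι → α :=
  fun i => univ.sup' univ_nonempty fun s => univ.inf' univ_nonempty fun j => max (c i s j) (U j)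

theorem minimaxOp_apply_le_iff {i : ι} :
    minimaxOp c U i ≤ u ↔ ∀ s, ∃ j, U j ≤ u ∧ c i s j ≤ u := by
  simp [minimaxOp, and_comm]

theorem isSafeSet_sublevel_of_minimaxOp_le (hU : minimaxOp c U ≤ U) (u : α) :
    IsSafeSet c u {i | U i ≤ u} :=
  fun i hi => minimaxOp_apply_le_iff.1 ((hU i).trans hi)

theorem IsSafeSet.minimaxOp_le (hA : IsSafeSet c u A) (hU : ∀ i ∈ A, U i ≤ u) :
    ∀ i ∈ A, minimaxOp c U i ≤ u := by
  refine fun i hi => minimaxOp_apply_le_iff.2 fun s => ?_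
  obtain ⟨j, hj, hc⟩ := hA i hi s
  exact ⟨j, hU j hj, hc⟩

theorem IsSafeSet.iterate_minimaxOp_le (hA : IsSafeSet c u A) (hU : ∀ i ∈ A, U i ≤ u) (k : ℕ) :
    ∀ i ∈ A, (minimaxOp c)^[k] U i ≤ u := by
  induction k with
  | zero => exact hU
  | succ k ih =>
    rw [Function.iterate_succ_apply']
    exact hA.minimaxOp_le ih

theorem safe_set_exists_iff_min_safety_le_general (c : ι → σ → ι → α) (U₀ : ι → α) (u : α)
    (hU₀ : ∀ i, U₀ i ≤ u) (K : ℕ)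
    (hK : minimaxOp c ((minimaxOp c)^[K] U₀) ≤ (minimaxOp c)^[K] U₀) :
    (∃ A : Set ι, A.Nonempty ∧ IsSafeSet c u A) ↔
      univ.inf' univ_nonempty ((minimaxOp c)^[K] U₀) ≤ u := by
  constructor
  · rintro ⟨A, ⟨a, ha⟩, hA⟩
    exact inf'_le_of_le _ (mem_univ a) (hA.iterate_minimaxOp_le (fun i _ => hU₀ i) K a ha)
  · intro hmin
    obtain ⟨a, -, ha⟩ := (inf'_le_iff _).1 hmin
    exact ⟨_, ⟨a, ha⟩, isSafeSet_sublevel_of_minimaxOp_le hK u⟩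

end Minimax

theorem safetyIter_eq_iterate_minimaxOp {X : Type*} [NormedAddCommGroup X] {N M : ℕ} [NeZero N]
    [NeZero M] (q : Fin N → X) (f : X → X) (ξ : Fin M → X) (k : ℕ) :
    safetyIter q f ξ k = (minimaxOp fun i s j => ‖f (q i) + ξ s - q j‖)^[k] 0 := by
  induction k with
  | zero => rfl
  | succ k ih =>
    rw [Function.iterate_succ_apply', ← ih]
    rfl

/-- Existence criterion for safe sets: a nonempty classical safe set for the control
bound `u₀` exists iff `u₀` is at least the minimum of the stabilized safety function. -/
theorem safe_set_exists_iff_min_safety_le {X : Type*} [NormedAddCommGroup X]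
    {N M : ℕ} [NeZero N] [NeZero M] (q : Fin N → X) (f : X → X) (ξ : Fin M → X)
    (u₀ : ℝ) (hu₀ : 0 ≤ u₀) (K : ℕ)
    (hK : safetyIter q f ξ (K + 1) = safetyIter q f ξ K) :
    (∃ A : Set (Fin N), A.Nonempty ∧
        ∀ i ∈ A, ∀ s : Fin M, ∃ j ∈ A, ‖f (q i) + ξ s - q j‖ ≤ u₀) ↔
      Finset.univ.inf' Finset.univ_nonempty (safetyIter q f ξ K) ≤ u₀ := by
  rw [safetyIter, safetyIter_eq_iterate_minimaxOp] at hK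
  rw [safetyIter_eq_iterate_minimaxOp]
  exact safe_set_exists_iff_min_safety_le_general _ 0 u₀ (fun _ => hu₀) K hK.le
end

section
/- Escape to infinity for the Hénon map with a = 6, b = 0.4: let (x_n, y_n) = H^[n](x₀, y₀). If x₀ ≤ −4 and x₀ ≤ y₀, then for every n one has x_{n+1} ≤ x_n − 4.4, the first-coordinate sequence (x_n) is strictly decreasing and tends to −∞ (tends to atBot), and the orbit leaves the square Q = [−4,4] × [−4,4] with ‖(x_n, y_n)‖ tending to infinity. -/
/-- The Hénon map with parameters `a = 6`, `b = 0.4`. -/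
noncomputable def henon : ℝ × ℝ → ℝ × ℝ := fun p => (6 - 0.4 * p.2 - p.1 ^ 2, p.1)

/-!
On the region `x ≤ -R`, `x ≤ y`, one step of the Hénon map with `0 ≤ b` changes the first coordinate
by `a - b * y - x ^ 2 - x ≤ a - (1 + b) * x - x ^ 2`. The right-hand side increases with `x` up to
`-(1 + b) / 2`, so as soon as `(1 + b) / 2 ≤ R` it is largest at `x = -R`, where it is
`-(R ^ 2 - (1 + b) * R - a)`. If this is negative, the first coordinate drops by a fixed amount;
the region is then invariant, because the new second coordinate is the old first one, and so the
drop recurs at every step.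
-/

open Filter Set

section SuccLeSub

variable {G : Type*} [AddCommGroup G] [PartialOrder G] [IsOrderedAddMonoid G] {u : ℕ → G} {δ : G}

theorem strictAnti_of_succ_le_sub (hδ : 0 < δ) (hu : ∀ n, u (n + 1) ≤ u n - δ) : StrictAnti u :=
  strictAnti_nat_of_succ_lt fun n => (hu n).trans_lt (sub_lt_self _ hδ)

theorem le_sub_nsmul_of_succ_le_sub (hu : ∀ n, u (n + 1) ≤ u n - δ) (n : ℕ) :
    u n ≤ u 0 - n • δ := by
  induction n with
  | zero => simp
  | succ n ih =>
    calc u (n + 1) ≤ u n - δ := hu n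
      _ ≤ u 0 - n • δ - δ := sub_le_sub_right ih δ
      _ = u 0 - (n + 1) • δ := by rw [succ_nsmul, sub_sub]

theorem tendsto_atBot_of_succ_le_sub [Archimedean G] (hδ : 0 < δ)
    (hu : ∀ n, u (n + 1) ≤ u n - δ) : Tendsto u atTop atBot := by
  have h_anti : Antitone u := (strictAnti_of_succ_le_sub hδ hu).antitone
  refine tendsto_atBot.2 fun c => ?_
  obtain ⟨n, hn⟩ : ∃ n : ℕ, u 0 - c ≤ n • δ := Archimedean.arch _ hδ
  filter_upwards [eventually_ge_atTop n] with m hnm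
  calc u m ≤ u n := h_anti hnm
    _ ≤ u 0 - n • δ := le_sub_nsmul_of_succ_le_sub hu n
    _ ≤ c := sub_le_comm.1 hn

end SuccLeSub

theorem tendsto_norm_atTop_of_tendsto_fst_atBot {ι E : Type*} [SeminormedAddCommGroup E]
    {l : Filter ι} {u : ι → ℝ × E} (hu : Tendsto (fun i => (u i).1) l atBot) :
    Tendsto (fun i => ‖u i‖) l atTop :=
  tendsto_atTop_mono (fun i => norm_fst_le (u i)) (tendsto_abs_atBot_atTop.comp hu)

/-- The Hénon map with arbitrary parameters, normalized so that `henon` is `henonMap 6 0.4`. -/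
def henonMap (a b : ℝ) : ℝ × ℝ → ℝ × ℝ := fun p => (a - b * p.2 - p.1 ^ 2, p.1)

/-- The escape region of the Hénon map beyond the threshold `R`: the points on or to the left of
the line `x = -R` and on or above the diagonal. -/
def henonEscapeRegion (R : ℝ) : Set (ℝ × ℝ) := {p | p.1 ≤ -R ∧ p.1 ≤ p.2}

section HenonMap

variable {a b R δ : ℝ} {p : ℝ × ℝ}

theorem henonMap_fst_le_sub (hb : 0 ≤ b) (hR : 1 + b ≤ 2 * R)
    (hδ : δ ≤ R ^ 2 - (1 + b) * R - a) (hp : p ∈ henonEscapeRegion R) :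
    (henonMap a b p).1 ≤ p.1 - δ := by
  obtain ⟨x, y⟩ := p
  obtain ⟨hx, hxy⟩ : x ≤ -R ∧ x ≤ y := hp
  have h_diag : b * x ≤ b * y := mul_le_mul_of_nonneg_left hxy hb
  have h_parabola : 0 ≤ (x + R) * (x - R + (1 + b)) :=
    mul_nonneg_of_nonpos_of_nonpos (by linarith) (by linarith)
  change a - b * y - x ^ 2 ≤ x - δ
  linarith

theorem mapsTo_henonMap_henonEscapeRegion (hb : 0 ≤ b) (hR : 1 + b ≤ 2 * R)
    (hRa : 0 ≤ R ^ 2 - (1 + b) * R - a) :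
    MapsTo (henonMap a b) (henonEscapeRegion R) (henonEscapeRegion R) := by
  intro p hp
  have h_le : (henonMap a b p).1 ≤ p.1 := by
    simpa only [sub_zero] using henonMap_fst_le_sub hb hR hRa hp
  exact ⟨h_le.trans hp.1, h_le⟩

theorem henonMap_iterate_succ_fst_le_sub (hb : 0 ≤ b) (hR : 1 + b ≤ 2 * R) (hδ₀ : 0 ≤ δ)
    (hδ : δ ≤ R ^ 2 - (1 + b) * R - a) (hp : p ∈ henonEscapeRegion R) (n : ℕ) :
    ((henonMap a b)^[n + 1] p).1 ≤ ((henonMap a b)^[n] p).1 - δ := by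
  rw [Function.iterate_succ_apply']
  exact henonMap_fst_le_sub hb hR hδ
    ((mapsTo_henonMap_henonEscapeRegion hb hR (hδ₀.trans hδ)).iterate n hp)

end HenonMap

theorem henon_escape_to_infinity_general {a b R δ : ℝ} (hb : 0 ≤ b) (hR : 1 + b ≤ 2 * R)
    (hδ₀ : 0 < δ) (hδ : δ ≤ R ^ 2 - (1 + b) * R - a) {p : ℝ × ℝ} (hp : p ∈ henonEscapeRegion R) :
    (∀ n : ℕ, ((henonMap a b)^[n + 1] p).1 ≤ ((henonMap a b)^[n] p).1 - δ) ∧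
    StrictAnti (fun n : ℕ => ((henonMap a b)^[n] p).1) ∧
    Tendsto (fun n : ℕ => ((henonMap a b)^[n] p).1) atTop atBot ∧
    Tendsto (fun n : ℕ => ‖(henonMap a b)^[n] p‖) atTop atTop ∧
    ∀ᶠ n : ℕ in atTop, (henonMap a b)^[n] p ∉ Icc (-R) R ×ˢ Icc (-R) R := by
  have h_step := henonMap_iterate_succ_fst_le_sub hb hR hδ₀.le hδ hp
  have h_bot : Tendsto (fun n : ℕ => ((henonMap a b)^[n] p).1) atTop atBot :=
    tendsto_atBot_of_succ_le_sub hδ₀ h_step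
  refine ⟨h_step, strictAnti_of_succ_le_sub hδ₀ h_step, h_bot,
    tendsto_norm_atTop_of_tendsto_fst_atBot h_bot, ?_⟩
  filter_upwards [h_bot.eventually_lt_atBot (-R)] with n hn hmem
  exact hn.not_ge hmem.1.1

/-- Escape to infinity for the Hénon map with `a = 6`, `b = 0.4`: if `x₀ ≤ −4` and
`x₀ ≤ y₀`, then the first coordinate decreases by at least `4.4` at every step, is
strictly decreasing and tends to `−∞`, and the orbit leaves the square
`Q = [−4,4] × [−4,4]` with its norm tending to infinity. -/
theorem henon_escape_to_infinity (x₀ y₀ : ℝ) (hx : x₀ ≤ -4) (hxy : x₀ ≤ y₀) :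
    (∀ n : ℕ, (henon^[n + 1] (x₀, y₀)).1 ≤ (henon^[n] (x₀, y₀)).1 - 4.4) ∧
    StrictAnti (fun n : ℕ => (henon^[n] (x₀, y₀)).1) ∧
    Filter.Tendsto (fun n : ℕ => (henon^[n] (x₀, y₀)).1) Filter.atTop Filter.atBot ∧
    Filter.Tendsto (fun n : ℕ => ‖henon^[n] (x₀, y₀)‖) Filter.atTop Filter.atTop ∧
    ∀ᶠ n : ℕ in Filter.atTop,
      henon^[n] (x₀, y₀) ∉ Set.Icc (-4 : ℝ) 4 ×ˢ Set.Icc (-4 : ℝ) 4 :=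
  henon_escape_to_infinity_general (a := 6) (b := 0.4)
    (by norm_num) (by norm_num) (by norm_num) (by norm_num) ⟨hx, hxy⟩
end
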